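/- Let 𝒱 be a weakly exact structure on an additive category 𝒜 (for instance the maximal exact structure 𝓔_max). Then the weakly exact structures on 𝒜 contained in 𝒱, ordered by containment, form a complete bounded lattice: the meet of any family is its intersection, every family {𝒲_i} admits a least upper bound (namely the intersection of all weakly exact structures contained in 𝒱 that contain every 𝒲_i), the least element is the split structure 𝓔_min and the greatest element is 𝒱. -/

import Mathlib

open CategoryTheory CategoryTheory.Limits ZeroObject

universe w v u

namespace WeaklyExactPaper

section Preamble

variable {C : Type u} [Category.{v} C] [Preadditive C] [HasZeroObject C] [HasBinaryBiproducts C]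

/-- `(i, d)` is a kernel–cokernel pair: `i` is a kernel of `d` and `d` is a cokernel of `i`. -/
structure IsKernelCokernelPair {A B Z : C} (i : A ⟶ B) (d : B ⟶ Z) : Prop where
  w : i ≫ d = 0
  isKernel : Nonempty (IsLimit (KernelFork.ofι i w))
  isCokernel : Nonempty (IsColimit (CokernelCofork.ofπ d w))

/-- Isomorphism of composable pairs `(i, d) ≅ (i', d')`. -/
def PairIso {A B Z A' B' Z' : C} (i : A ⟶ B) (d : B ⟶ Z) (i' : A' ⟶ B') (d' : B' ⟶ Z') : Prop :=
  ∃ (eA : A ≅ A') (eB : B ≅ B') (eZ : Z ≅ Z'),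
    i ≫ eB.hom = eA.hom ≫ i' ∧ d ≫ eZ.hom = eB.hom ≫ d'

/-- `f` is a kernel of some morphism. -/
def IsSomeKernel {A B : C} (f : A ⟶ B) : Prop :=
  ∃ (Z : C) (g : B ⟶ Z) (w : f ≫ g = 0), Nonempty (IsLimit (KernelFork.ofι f w))

/-- `g` is a cokernel of some morphism. -/
def IsSomeCokernel {B Z : C} (g : B ⟶ Z) : Prop :=
  ∃ (A : C) (f : A ⟶ B) (w : f ≫ g = 0), Nonempty (IsColimit (CokernelCofork.ofπ g w))

/-- `f` admits a cokernel. -/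
def AdmitsCokernel {A B : C} (f : A ⟶ B) : Prop :=
  ∃ (Z : C) (g : B ⟶ Z) (w : f ≫ g = 0), Nonempty (IsColimit (CokernelCofork.ofπ g w))

/-- `g` admits a kernel. -/
def AdmitsKernel {B Z : C} (g : B ⟶ Z) : Prop :=
  ∃ (A : C) (f : A ⟶ B) (w : f ≫ g = 0), Nonempty (IsLimit (KernelFork.ofι f w))

/-- A weakly exact structure on an additive category: a class of kernel–cokernel pairs,
closed under isomorphisms of composable pairs and binary direct sums, containing the pairs
`(1_X, X ⟶ 0)` and `(0 ⟶ X, 1_X)`, and satisfying the pushout axiom (E2) and the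
pullback axiom (E2)ᵒᵖ. -/
structure WeaklyExactStructure (C : Type u) [Category.{v} C] [Preadditive C]
    [HasZeroObject C] [HasBinaryBiproducts C] where
  W : ∀ ⦃A B Z : C⦄, (A ⟶ B) → (B ⟶ Z) → Prop
  kc_of_mem : ∀ {A B Z : C} {i : A ⟶ B} {d : B ⟶ Z}, W i d → IsKernelCokernelPair i d
  iso_closed : ∀ {A B Z A' B' Z' : C} {i : A ⟶ B} {d : B ⟶ Z} {i' : A' ⟶ B'} {d' : B' ⟶ Z'},
    W i d → PairIso i d i' d' → W i' d'
  sum_mem : ∀ {A₁ B₁ Z₁ A₂ B₂ Z₂ : C} {i₁ : A₁ ⟶ B₁} {d₁ : B₁ ⟶ Z₁} {i₂ : A₂ ⟶ B₂}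
    {d₂ : B₂ ⟶ Z₂}, W i₁ d₁ → W i₂ d₂ → W (biprod.map i₁ i₂) (biprod.map d₁ d₂)
  id_zero_mem : ∀ X : C, W (𝟙 X) (0 : X ⟶ (0 : C))
  zero_id_mem : ∀ X : C, W (0 : (0 : C) ⟶ X) (𝟙 X)
  pushout_mem : ∀ {A B Z A' : C} {i : A ⟶ B} {d : B ⟶ Z}, W i d → ∀ t : A ⟶ A',
    ∃ (S : C) (g : B ⟶ S) (i' : A' ⟶ S), IsPushout i t g i' ∧ ∃ (Z' : C) (d' : S ⟶ Z'), W i' d'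
  pullback_mem : ∀ {A B Z D : C} {i : A ⟶ B} {d : B ⟶ Z}, W i d → ∀ t : D ⟶ Z,
    ∃ (P : C) (p : P ⟶ B) (q : P ⟶ D), IsPullback p q d t ∧ ∃ (A'' : C) (i'' : A'' ⟶ P), W i'' q

/-- `i` is an admissible monic of `𝒲`. -/
def AdmissibleMonic (𝒲 : WeaklyExactStructure C) {A B : C} (i : A ⟶ B) : Prop :=
  ∃ (Z : C) (d : B ⟶ Z), 𝒲.W i d

/-- `d` is an admissible epic of `𝒲`. -/
def AdmissibleEpic (𝒲 : WeaklyExactStructure C) {B Z : C} (d : B ⟶ Z) : Prop :=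
  ∃ (A : C) (i : A ⟶ B), 𝒲.W i d

/-- `(i, d)` is a split kernel–cokernel pair. -/
def IsSplitPair {A B Z : C} (i : A ⟶ B) (d : B ⟶ Z) : Prop :=
  ∃ (X Y : C), PairIso (biprod.inl : X ⟶ X ⊞ Y) (biprod.snd : X ⊞ Y ⟶ Y) i d

end Preamble

section Statement

variable {C : Type u} [Category.{v} C] [Preadditive C] [HasZeroObject C] [HasBinaryBiproducts C]

/-- Containment of weakly exact structures. -/
def WESle (𝒲 𝒱 : WeaklyExactStructure C) : Prop :=
  ∀ ⦃A B Z : C⦄ (i : A ⟶ B) (d : B ⟶ Z), 𝒲.W i d → 𝒱.W i d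

/-!
Axiom (E2) only provides *some* admissible pushout, depending on the structure. As pushouts and
cokernels are unique up to isomorphism, every pushout of an admissible monic is then admissible,
with any of its cokernels, so the pushout provided by one structure serves all the structures
containing the given pair. This, with its dual, makes intersections of weakly exact structures
weakly exact, and the join of a family is the intersection of its upper bounds, among which is `𝒱`.
The split pairs lie in every structure because `X ⟶ X ⊞ Y ⟶ Y` is the direct sum of `(𝟙 X, X ⟶ 0)`
and `(0 ⟶ Y, 𝟙 Y)`.
-/

section Category

variable {𝒜 : Type u} [Category.{v} 𝒜]

namespace PairIso

variable {A B Z A' B' Z' : 𝒜} {i : A ⟶ B} {d : B ⟶ Z} {i' : A' ⟶ B'} {d' : B' ⟶ Z'}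

theorem trans {A'' B'' Z'' : 𝒜} {i'' : A'' ⟶ B''} {d'' : B'' ⟶ Z''}
    (h : PairIso i d i' d') (h' : PairIso i' d' i'' d'') : PairIso i d i'' d'' := by
  obtain ⟨eA, eB, eZ, hi, hd⟩ := h
  obtain ⟨eA', eB', eZ', hi', hd'⟩ := h'
  exact ⟨eA ≪≫ eA', eB ≪≫ eB', eZ ≪≫ eZ', by simp [reassoc_of% hi, hi'],
    by simp [reassoc_of% hd, hd']⟩

variable [HasZeroMorphisms 𝒜]

theorem comp_eq_zero (h : PairIso i d i' d') (w : i ≫ d = 0) : i' ≫ d' = 0 := by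
  obtain ⟨eA, eB, eZ, hi, hd⟩ := h
  rw [← cancel_epi eA.hom, ← reassoc_of% hi, ← hd, reassoc_of% w, zero_comp, comp_zero]

theorem of_isColimit {w : i ≫ d = 0} {w' : i' ≫ d' = 0}
    (hd : IsColimit (CokernelCofork.ofπ d w)) (hd' : IsColimit (CokernelCofork.ofπ d' w'))
    (eA : A ≅ A') (eB : B ≅ B') (comm : i ≫ eB.hom = eA.hom ≫ i') : PairIso i d i' d' :=
  let φ : Arrow.mk i ≅ Arrow.mk i' := Arrow.isoMk eA eB comm.symm
  ⟨eA, eB, CokernelCofork.mapIsoOfIsColimit hd hd' φ, comm,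
    CokernelCofork.π_mapOfIsColimit hd (CokernelCofork.ofπ d' w') φ.hom⟩

theorem of_isLimit {w : i ≫ d = 0} {w' : i' ≫ d' = 0}
    (hi : IsLimit (KernelFork.ofι i w)) (hi' : IsLimit (KernelFork.ofι i' w'))
    (eB : B ≅ B') (eZ : Z ≅ Z') (comm : d ≫ eZ.hom = eB.hom ≫ d') : PairIso i d i' d' :=
  let φ : Arrow.mk d ≅ Arrow.mk d' := Arrow.isoMk eB eZ comm.symm
  ⟨KernelFork.mapIsoOfIsLimit hi hi' φ, eB, eZ,
    (KernelFork.mapOfIsLimit_ι (KernelFork.ofι i w) hi' φ.hom).symm, comm⟩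

end PairIso

variable [Preadditive 𝒜]

section Splitting

variable [HasZeroObject 𝒜] {S : ShortComplex 𝒜}

theorem isPushout_of_splitting (σ : S.Splitting) {A : 𝒜} [HasBinaryBiproduct A S.X₃]
    (t : S.X₁ ⟶ A) :
    IsPushout S.f t (biprod.lift (σ.r ≫ t) S.g) (biprod.inl : A ⟶ A ⊞ S.X₃) := by
  -- Paste with the square exhibiting `S.X₂` as the coproduct of `S.X₁` and `S.X₃`.
  let b : BinaryBicone S.X₁ S.X₃ :=
    { pt := S.X₂, fst := σ.r, snd := S.g, inl := S.f, inr := σ.s }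
  have coprod : IsPushout (0 : 0 ⟶ S.X₃) (0 : 0 ⟶ S.X₁) σ.s S.f :=
    (IsPushout.of_isBilimit (isBinaryBilimitOfTotal b σ.id)).flip
  have inr_eq : σ.s ≫ biprod.lift (σ.r ≫ t) S.g = biprod.inr := by ext <;> simp
  have comm : S.f ≫ biprod.lift (σ.r ≫ t) S.g = t ≫ biprod.inl := by ext <;> simp
  refine IsPushout.of_top ?_ comm coprod
  simpa only [zero_comp, inr_eq] using (IsPushout.of_has_biproduct A S.X₃).flip

theorem isPullback_of_splitting (σ : S.Splitting) {D : 𝒜} [HasBinaryBiproduct S.X₁ D]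
    (t : D ⟶ S.X₃) :
    IsPullback (biprod.desc S.f (t ≫ σ.s)) (biprod.snd : S.X₁ ⊞ D ⟶ D) S.g t := by
  let b : BinaryBicone S.X₁ S.X₃ :=
    { pt := S.X₂, fst := σ.r, snd := S.g, inl := S.f, inr := σ.s }
  have prod : IsPullback σ.r S.g (0 : S.X₁ ⟶ 0) (0 : S.X₃ ⟶ 0) :=
    IsPullback.of_isBilimit (isBinaryBilimitOfTotal b σ.id)
  have fst_eq : biprod.desc S.f (t ≫ σ.s) ≫ σ.r = biprod.fst := by ext <;> simp
  have comm : biprod.desc S.f (t ≫ σ.s) ≫ S.g = biprod.snd ≫ t := by ext <;> simp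
  refine IsPullback.of_right ?_ comm prod
  simpa only [comp_zero, fst_eq] using IsPullback.of_has_biproduct S.X₁ D

end Splitting

variable [HasBinaryBiproducts 𝒜]

theorem isSplitPair_inl_snd (X Y : 𝒜) :
    IsSplitPair (biprod.inl : X ⟶ X ⊞ Y) (biprod.snd : X ⊞ Y ⟶ Y) :=
  ⟨X, Y, Iso.refl _, Iso.refl _, Iso.refl _, by simp, by simp⟩

theorem isSplitPair_iff_nonempty_splitting {A B Z : 𝒜} {i : A ⟶ B} {d : B ⟶ Z} :
    IsSplitPair i d ↔ ∃ w : i ≫ d = 0, Nonempty (ShortComplex.mk i d w).Splitting := by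
  constructor
  · rintro ⟨X, Y, h⟩
    have w : i ≫ d = 0 := h.comp_eq_zero biprod.inl_snd
    obtain ⟨eX, eB, eY, hi, hd⟩ := h
    exact ⟨w, ⟨(ShortComplex.Splitting.ofHasBinaryBiproduct X Y).ofIso
      (ShortComplex.isoMk eX eB eY hi.symm hd.symm)⟩⟩
  · rintro ⟨w, ⟨σ⟩⟩
    exact ⟨A, Z, Iso.refl _, σ.isoBinaryBiproduct.symm, Iso.refl _, by simp,
      by ext <;> simp [w, σ.s_g]⟩

namespace IsSplitPair

variable {A B Z : 𝒜} {i : A ⟶ B} {d : B ⟶ Z}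

theorem of_pairIso {A' B' Z' : 𝒜} {i' : A' ⟶ B'} {d' : B' ⟶ Z'} (h : IsSplitPair i d)
    (e : PairIso i d i' d') : IsSplitPair i' d' := by
  obtain ⟨X, Y, h⟩ := h
  exact ⟨X, Y, h.trans e⟩

theorem biprod_map {A' B' Z' : 𝒜} {i' : A' ⟶ B'} {d' : B' ⟶ Z'} (h : IsSplitPair i d)
    (h' : IsSplitPair i' d') : IsSplitPair (biprod.map i i') (biprod.map d d') := by
  obtain ⟨w, ⟨σ⟩⟩ := isSplitPair_iff_nonempty_splitting.1 h
  obtain ⟨w', ⟨σ'⟩⟩ := isSplitPair_iff_nonempty_splitting.1 h'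
  refine isSplitPair_iff_nonempty_splitting.2 ⟨by ext <;> simp [w, w'],
    ⟨{ r := biprod.map σ.r σ'.r
       s := biprod.map σ.s σ'.s
       f_r := by ext <;> simp [σ.f_r, σ'.f_r]
       s_g := by ext <;> simp [σ.s_g, σ'.s_g]
       id := ?_ }⟩⟩
  have total : σ.r ≫ i + d ≫ σ.s = 𝟙 B := σ.id
  have total' : σ'.r ≫ i' + d' ≫ σ'.s = 𝟙 B' := σ'.id
  apply biprod.hom_ext'
  · simpa using total =≫ biprod.inl
  · simpa using total' =≫ biprod.inr

variable [HasZeroObject 𝒜]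

theorem isKernelCokernelPair (h : IsSplitPair i d) : IsKernelCokernelPair i d := by
  obtain ⟨w, ⟨σ⟩⟩ := isSplitPair_iff_nonempty_splitting.1 h
  exact ⟨w, ⟨σ.fIsKernel⟩, ⟨σ.gIsCokernel⟩⟩

theorem exists_isPushout (h : IsSplitPair i d) {A' : 𝒜} (t : A ⟶ A') :
    ∃ (S : 𝒜) (g : B ⟶ S) (i' : A' ⟶ S), IsPushout i t g i' ∧
      ∃ (Z' : 𝒜) (d' : S ⟶ Z'), IsSplitPair i' d' := by
  obtain ⟨w, ⟨σ⟩⟩ := isSplitPair_iff_nonempty_splitting.1 h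
  exact ⟨_, _, _, isPushout_of_splitting σ t, Z, biprod.snd, isSplitPair_inl_snd A' Z⟩

theorem exists_isPullback (h : IsSplitPair i d) {D : 𝒜} (t : D ⟶ Z) :
    ∃ (P : 𝒜) (p : P ⟶ B) (q : P ⟶ D), IsPullback p q d t ∧
      ∃ (A' : 𝒜) (i' : A' ⟶ P), IsSplitPair i' q := by
  obtain ⟨w, ⟨σ⟩⟩ := isSplitPair_iff_nonempty_splitting.1 h
  exact ⟨_, _, _, isPullback_of_splitting σ t, A, biprod.inl, isSplitPair_inl_snd A D⟩

end IsSplitPair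

end Category

namespace WeaklyExactStructure

/-- The split kernel–cokernel pairs, as a weakly exact structure; this is the paper's `𝓔_min`. -/
def split (C : Type u) [Category.{v} C] [Preadditive C] [HasZeroObject C]
    [HasBinaryBiproducts C] : WeaklyExactStructure C where
  W _ _ _ i d := IsSplitPair i d
  kc_of_mem h := h.isKernelCokernelPair
  iso_closed h e := h.of_pairIso e
  sum_mem h h' := h.biprod_map h'
  id_zero_mem X := isSplitPair_iff_nonempty_splitting.2
    ⟨comp_zero, ⟨.ofIsIsoOfIsZero _ (inferInstanceAs (IsIso (𝟙 X))) (isZero_zero C)⟩⟩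
  zero_id_mem X := isSplitPair_iff_nonempty_splitting.2
    ⟨zero_comp, ⟨.ofIsZeroOfIsIso _ (isZero_zero C) (inferInstanceAs (IsIso (𝟙 X)))⟩⟩
  pushout_mem h t := h.exists_isPushout t
  pullback_mem h t := h.exists_isPullback t

theorem inl_snd_mem (𝒲 : WeaklyExactStructure C) (X Y : C) :
    𝒲.W (biprod.inl : X ⟶ X ⊞ Y) (biprod.snd : X ⊞ Y ⟶ Y) :=
  𝒲.iso_closed (𝒲.sum_mem (𝒲.id_zero_mem X) (𝒲.zero_id_mem Y))
    ⟨(isoBiprodZero (isZero_zero C)).symm, Iso.refl _, (isoZeroBiprod (isZero_zero C)).symm,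
      by ext <;> simp, by ext <;> simp⟩

theorem split_le (𝒲 : WeaklyExactStructure C) : WESle (split C) 𝒲 := by
  rintro A B Z i d ⟨X, Y, h⟩
  exact 𝒲.iso_closed (𝒲.inl_snd_mem X Y) h

theorem mem_of_isPushout (𝒲 : WeaklyExactStructure C) {A B Z A' S Z' : C} {i : A ⟶ B}
    {d : B ⟶ Z} (h : 𝒲.W i d) {t : A ⟶ A'} {g : B ⟶ S} {i' : A' ⟶ S} {d' : S ⟶ Z'}
    (sq : IsPushout i t g i') {w : i' ≫ d' = 0} (hd' : IsColimit (CokernelCofork.ofπ d' w)) :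
    𝒲.W i' d' := by
  obtain ⟨S₁, g₁, i₁, sq₁, Z₁, d₁, h₁⟩ := 𝒲.pushout_mem h t
  obtain ⟨hd₁⟩ := (𝒲.kc_of_mem h₁).isCokernel
  exact 𝒲.iso_closed h₁
    (.of_isColimit hd₁ hd' (Iso.refl _) (sq₁.isoIsPushout _ _ sq) (by simp))

theorem mem_of_isPullback (𝒲 : WeaklyExactStructure C) {A B Z D P A' : C} {i : A ⟶ B}
    {d : B ⟶ Z} (h : 𝒲.W i d) {t : D ⟶ Z} {p : P ⟶ B} {q : P ⟶ D} {j : A' ⟶ P}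
    (sq : IsPullback p q d t) {w : j ≫ q = 0} (hj : IsLimit (KernelFork.ofι j w)) :
    𝒲.W j q := by
  obtain ⟨P₁, p₁, q₁, sq₁, A₁, j₁, h₁⟩ := 𝒲.pullback_mem h t
  obtain ⟨hj₁⟩ := (𝒲.kc_of_mem h₁).isKernel
  exact 𝒲.iso_closed h₁
    (.of_isLimit hj₁ hj (sq₁.isoIsPullback _ _ sq) (Iso.refl _) (by simp))

/-- The intersection of a nonempty set of weakly exact structures; over the empty set it would be
the class of all composable pairs, which are not all kernel–cokernel pairs. -/
def sInter (𝒮 : Set (WeaklyExactStructure C)) (h𝒮 : 𝒮.Nonempty) : WeaklyExactStructure C where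
  W _ _ _ i d := ∀ 𝒲 ∈ 𝒮, 𝒲.W i d
  kc_of_mem h := by
    obtain ⟨𝒲, h𝒲⟩ := h𝒮
    exact 𝒲.kc_of_mem (h 𝒲 h𝒲)
  iso_closed h e 𝒲 h𝒲 := 𝒲.iso_closed (h 𝒲 h𝒲) e
  sum_mem h h' 𝒲 h𝒲 := 𝒲.sum_mem (h 𝒲 h𝒲) (h' 𝒲 h𝒲)
  id_zero_mem X 𝒲 _ := 𝒲.id_zero_mem X
  zero_id_mem X 𝒲 _ := 𝒲.zero_id_mem X
  pushout_mem h t := by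
    obtain ⟨𝒲, h𝒲⟩ := h𝒮
    obtain ⟨S, g, i', sq, Z', d', h'⟩ := 𝒲.pushout_mem (h 𝒲 h𝒲) t
    exact ⟨S, g, i', sq, Z', d', fun 𝒯 h𝒯 ↦
      𝒯.mem_of_isPushout (h 𝒯 h𝒯) sq (𝒲.kc_of_mem h').isCokernel.some⟩
  pullback_mem h t := by
    obtain ⟨𝒲, h𝒲⟩ := h𝒮
    obtain ⟨P, p, q, sq, A', i', h'⟩ := 𝒲.pullback_mem (h 𝒲 h𝒲) t
    exact ⟨P, p, q, sq, A', i', fun 𝒯 h𝒯 ↦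
      𝒯.mem_of_isPullback (h 𝒯 h𝒯) sq (𝒲.kc_of_mem h').isKernel.some⟩

theorem sInter_le {𝒮 : Set (WeaklyExactStructure C)} {𝒲 : WeaklyExactStructure C}
    (h𝒲 : 𝒲 ∈ 𝒮) : WESle (sInter 𝒮 ⟨𝒲, h𝒲⟩) 𝒲 :=
  fun _ _ _ _ _ h ↦ h 𝒲 h𝒲

theorem le_sInter {𝒮 : Set (WeaklyExactStructure C)} (h𝒮 : 𝒮.Nonempty)
    {𝒲 : WeaklyExactStructure C} (h : ∀ 𝒯 ∈ 𝒮, WESle 𝒲 𝒯) : WESle 𝒲 (sInter 𝒮 h𝒮) :=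
  fun _ _ _ i d hid 𝒯 h𝒯 ↦ h 𝒯 h𝒯 i d hid

end WeaklyExactStructure

theorem WESle.refl (𝒲 : WeaklyExactStructure C) : WESle 𝒲 𝒲 :=
  fun _ _ _ _ _ h ↦ h

theorem WESle.trans {𝒰 𝒱 𝒲 : WeaklyExactStructure C} (h : WESle 𝒰 𝒱) (h' : WESle 𝒱 𝒲) :
    WESle 𝒰 𝒲 :=
  fun _ _ _ i d hid ↦ h' i d (h i d hid)

/-- The weakly exact structures contained in a given weakly exact structure `𝒱` form a
complete bounded lattice: nonempty families have meets given by intersection, every family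
admits a least upper bound, the split structure is the least element and `𝒱` is the
greatest element. -/
theorem statement13 (𝒱 : WeaklyExactStructure C) :
    (∀ (ι : Type w) [Nonempty ι] (F : ι → WeaklyExactStructure C),
      (∀ k, WESle (F k) 𝒱) →
      ∃ G : WeaklyExactStructure C, WESle G 𝒱 ∧
        (∀ {A B Z : C} (i : A ⟶ B) (d : B ⟶ Z), G.W i d ↔ ∀ k, (F k).W i d)) ∧
    (∀ (ι : Type w) (F : ι → WeaklyExactStructure C),
      (∀ k, WESle (F k) 𝒱) →
      ∃ S : WeaklyExactStructure C, WESle S 𝒱 ∧ (∀ k, WESle (F k) S) ∧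
        (∀ T : WeaklyExactStructure C, WESle T 𝒱 → (∀ k, WESle (F k) T) → WESle S T) ∧
        (∀ {A B Z : C} (i : A ⟶ B) (d : B ⟶ Z),
          S.W i d ↔ ∀ T : WeaklyExactStructure C,
            WESle T 𝒱 → (∀ k, WESle (F k) T) → T.W i d)) ∧
    (∃ Emin : WeaklyExactStructure C,
      (∀ {A B Z : C} (i : A ⟶ B) (d : B ⟶ Z), Emin.W i d ↔ IsSplitPair i d) ∧
      WESle Emin 𝒱 ∧
      (∀ T : WeaklyExactStructure C, WESle T 𝒱 → WESle Emin T)) ∧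
    (∀ T : WeaklyExactStructure C, WESle T 𝒱 → WESle T 𝒱) := by
  refine ⟨fun ι _ F hF ↦ ?meet, fun ι F hF ↦ ?join,
    ⟨.split C, fun _ _ ↦ Iff.rfl, 𝒱.split_le, fun T _ ↦ T.split_le⟩, fun _ hT ↦ hT⟩
  case meet =>
    obtain ⟨k⟩ := ‹Nonempty ι›
    have hk : F k ∈ Set.range F := Set.mem_range_self k
    exact ⟨.sInter (Set.range F) ⟨F k, hk⟩, (WeaklyExactStructure.sInter_le hk).trans (hF k),
      fun _ _ ↦ Set.forall_mem_range⟩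
  case join =>
    let bounds : Set (WeaklyExactStructure C) := {T | WESle T 𝒱 ∧ ∀ k, WESle (F k) T}
    have h𝒱 : 𝒱 ∈ bounds := ⟨WESle.refl 𝒱, hF⟩
    exact ⟨.sInter bounds ⟨𝒱, h𝒱⟩, WeaklyExactStructure.sInter_le h𝒱,
      fun k ↦ WeaklyExactStructure.le_sInter _ fun _ hT ↦ hT.2 k,
      fun _ hT hFT ↦ WeaklyExactStructure.sInter_le (show _ ∈ bounds from ⟨hT, hFT⟩),
      fun _ _ ↦ ⟨fun h T hT hFT ↦ h T ⟨hT, hFT⟩, fun h T hT ↦ h T hT.1 hT.2⟩⟩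

end Statement

end WeaklyExactPaper
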